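/- The free De Morgan algebra on two generators has exactly 168 elements; equivalently, the quotient of the set of {∧, ∨, ¬, 0, 1}-terms in two fixed variables by the equivalence relation 't ~ s iff t and s evaluate to the same element of D₄ under every assignment of the two variables into D₄' has exactly 168 equivalence classes. -/

import Mathlib

/-!
The algebra `D₄` is `Bool × Bool` with the lattice operations taken coordinatewise and
`¬(p, q) = (!q, !p)`. Exchanging the two coordinates (that is, `a` and `b`) is an automorphism, so
a term function is determined by its first coordinate (`snd_eval`). If the variables take the
values `(p, !q)` and `(r, !s)`, then the literals `x, ¬x, y, ¬y` have first coordinates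
`p, q, r, s`. All operations of `D₄` preserve the order `b ⊑ 0, 1 ⊑ a`, hence the first coordinate
of a term is a monotone Boolean function of `p, q, r, s` (`fst_eval_mono`). Conversely, each such
function comes from a term, because a monotone `f : Bool → M` satisfies
`f x = f 0 ∨ (x ∧ f 1)` (`expand_spec`); expand along the four literals. So the classes of terms
correspond to monotone Boolean functions of four variables. These are counted by currying: a
monotone map `Bool → L` is a pair `l ≤ l'` in `L`, and four iterations from `Bool` give
3, 6, 20, 168.
-/

/-- Terms in the language {∧, ∨, ¬, 0, 1} over a set `V` of variables. -/
inductive DMTerm (V : Type) : Type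
  | var : V → DMTerm V
  | meet : DMTerm V → DMTerm V → DMTerm V
  | join : DMTerm V → DMTerm V → DMTerm V
  | neg : DMTerm V → DMTerm V
  | zero : DMTerm V
  | one : DMTerm V

/-- An algebra in the language {∧, ∨, ¬, 0, 1}. -/
structure DMAlg where
  carrier : Type
  meet : carrier → carrier → carrier
  join : carrier → carrier → carrier
  neg : carrier → carrier
  zero : carrier
  one : carrier

/-- Evaluation of a term in an algebra under an assignment of the variables. -/
def DMTerm.eval {V : Type} (A : DMAlg) (v : V → A.carrier) : DMTerm V → A.carrier
  | .var x => v x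
  | .meet t s => A.meet (t.eval A v) (s.eval A v)
  | .join t s => A.join (t.eval A v) (s.eval A v)
  | .neg t => A.neg (t.eval A v)
  | .zero => A.zero
  | .one => A.one

/-- Substitution of terms for variables. -/
def DMTerm.subst {V W : Type} (s : V → DMTerm W) : DMTerm V → DMTerm W
  | .var x => s x
  | .meet t u => .meet (t.subst s) (u.subst s)
  | .join t u => .join (t.subst s) (u.subst s)
  | .neg t => .neg (t.subst s)
  | .zero => .zero
  | .one => .one

/-- Validity of the identity `φ ≈ ψ` in the algebra `A`. -/
def DMIdValid {V : Type} (A : DMAlg) (φ ψ : DMTerm V) : Prop :=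
  ∀ v : V → A.carrier, φ.eval A v = ψ.eval A v

/-- Validity of the quasi-identity `Γ ⇒ φ ≈ ψ` in the algebra `A`. -/
def DMQValid (A : DMAlg) (Γ : List (DMTerm ℕ × DMTerm ℕ)) (φ ψ : DMTerm ℕ) : Prop :=
  ∀ v : ℕ → A.carrier,
    (∀ p ∈ Γ, p.1.eval A v = p.2.eval A v) → φ.eval A v = ψ.eval A v

/-- Admissibility of the quasi-identity `Γ ⇒ φ ≈ ψ` in the algebra `M`. -/
def DMAdmissible (M : DMAlg) (Γ : List (DMTerm ℕ × DMTerm ℕ)) (φ ψ : DMTerm ℕ) : Prop :=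
  ∀ s : ℕ → DMTerm ℕ,
    (∀ p ∈ Γ, DMIdValid M (p.1.subst s) (p.2.subst s)) →
    DMIdValid M (φ.subst s) (ψ.subst s)

/-- The four-element De Morgan algebra D₄: 0 < a, b < 1 with a, b incomparable. -/
inductive D4 : Type
  | z  -- 0
  | a
  | b
  | u  -- 1
deriving DecidableEq

def D4.meet : D4 → D4 → D4
  | .z, _ => .z
  | _, .z => .z
  | .u, y => y
  | x, .u => x
  | .a, .a => .a
  | .b, .b => .b
  | .a, .b => .z
  | .b, .a => .z

def D4.join : D4 → D4 → D4
  | .u, _ => .u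
  | _, .u => .u
  | .z, y => y
  | x, .z => x
  | .a, .a => .a
  | .b, .b => .b
  | .a, .b => .u
  | .b, .a => .u

def D4.neg : D4 → D4
  | .z => .u
  | .u => .z
  | .a => .a
  | .b => .b

def D4alg : DMAlg :=
  ⟨D4, D4.meet, D4.join, D4.neg, D4.z, D4.u⟩

/-- Two terms in two variables are equivalent iff they evaluate to the same
element of D₄ under every assignment of the two variables into D₄. -/
def freeDM2Setoid : Setoid (DMTerm (Fin 2)) where
  r t s := ∀ v : Fin 2 → D4, t.eval D4alg v = s.eval D4alg v
  iseqv := ⟨fun _ _ => rfl, fun h v => (h v).symm, fun h1 h2 v => (h1 v).trans (h2 v)⟩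

namespace FreeDM2

/-! ### Monotone Boolean functions -/

/-- Monotone maps from `Bool` to `L` are the comparable pairs of `L`. -/
def boolHomEquiv (L : Type) [Preorder L] :
    {p : L × L // p.1 ≤ p.2} ≃ (Bool →o L) where
  toFun p := ⟨fun x => bif x then p.1.2 else p.1.1, by
    intro x y h
    cases x <;> cases y
    · exact le_rfl
    · exact p.2
    · exact absurd h (by decide)
    · exact le_rfl⟩
  invFun f := ⟨(f false, f true), f.monotone (Bool.false_le true)⟩
  left_inv _ := rfl
  right_inv f := by
    ext x
    cases x <;> rfl

instance boolHomFintype (L : Type) [Preorder L] [Fintype L] [DecidableLE L] :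
    Fintype (Bool →o L) :=
  Fintype.ofEquiv _ (boolHomEquiv L)

instance boolHomDecidableLE (L : Type) [Preorder L] [DecidableLE L] :
    DecidableLE (Bool →o L) := fun f g =>
  decidable_of_iff (f false ≤ g false ∧ f true ≤ g true)
    ⟨fun h x => by cases x; exacts [h.1, h.2], fun h => ⟨h false, h true⟩⟩

/-- Monotone Boolean functions of four variables. -/
abbrev MonoFun : Type := ((Bool × Bool) × Bool) × Bool →o Bool

theorem card_curried : Fintype.card (Bool →o Bool →o Bool →o Bool →o Bool) = 168 := by
  decide +kernel

theorem card_monoFun : Nat.card MonoFun = 168 := by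
  have e : MonoFun ≃ (Bool →o Bool →o Bool →o Bool →o Bool) :=
    (OrderHom.curry.trans (OrderHom.curry.trans OrderHom.curry)).toEquiv
  rw [Nat.card_congr e, Nat.card_eq_fintype_card, card_curried]

/-! ### Coordinates on `D₄` -/

/-- First coordinate of `D₄ = Bool × Bool`, where `a = (1, 0)` and `b = (0, 1)`. -/
def fst : D4 → Bool
  | .z => false
  | .a => true
  | .b => false
  | .u => true

/-- Second coordinate of `D₄ = Bool × Bool`. -/
def snd : D4 → Bool
  | .z => false
  | .a => false
  | .b => true
  | .u => true

/-- The element of `D₄` with the given coordinates. -/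
def mk : Bool → Bool → D4
  | false, false => .z
  | true, false => .a
  | false, true => .b
  | true, true => .u

@[simp] theorem fst_mk (p q : Bool) : fst (mk p q) = p := by cases p <;> cases q <;> rfl
@[simp] theorem snd_mk (p q : Bool) : snd (mk p q) = q := by cases p <;> cases q <;> rfl
@[simp] theorem mk_fst_snd (x : D4) : mk (fst x) (snd x) = x := by cases x <;> rfl

theorem ext_coord {x y : D4} (h₁ : fst x = fst y) (h₂ : snd x = snd y) : x = y := by
  rw [← mk_fst_snd x, ← mk_fst_snd y, h₁, h₂]

theorem fst_meet (x y : D4) : fst (x.meet y) = (fst x && fst y) := by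
  cases x <;> cases y <;> rfl
theorem snd_meet (x y : D4) : snd (x.meet y) = (snd x && snd y) := by
  cases x <;> cases y <;> rfl
theorem fst_join (x y : D4) : fst (x.join y) = (fst x || fst y) := by
  cases x <;> cases y <;> rfl
theorem snd_join (x y : D4) : snd (x.join y) = (snd x || snd y) := by
  cases x <;> cases y <;> rfl
theorem fst_neg (x : D4) : fst x.neg = !(snd x) := by cases x <;> rfl
theorem snd_neg (x : D4) : snd x.neg = !(fst x) := by cases x <;> rfl

/-! ### Term functions in coordinates -/

/-- Evaluation in `D₄`, with values in `D4` rather than in `D4alg.carrier`. -/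
def ev (v : Fin 2 → D4) (t : DMTerm (Fin 2)) : D4 := t.eval D4alg v

theorem ev_var (v : Fin 2 → D4) (i : Fin 2) : ev v (.var i) = v i := rfl
theorem ev_meet (v : Fin 2 → D4) (t s : DMTerm (Fin 2)) :
    ev v (.meet t s) = (ev v t).meet (ev v s) := rfl
theorem ev_join (v : Fin 2 → D4) (t s : DMTerm (Fin 2)) :
    ev v (.join t s) = (ev v t).join (ev v s) := rfl
theorem ev_neg (v : Fin 2 → D4) (t : DMTerm (Fin 2)) : ev v (.neg t) = (ev v t).neg := rfl
theorem ev_zero (v : Fin 2 → D4) : ev v .zero = .z := rfl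
theorem ev_one (v : Fin 2 → D4) : ev v .one = .u := rfl

/-- The automorphism of `D₄` exchanging `a` and `b`. -/
def swap (x : D4) : D4 := mk (snd x) (fst x)

theorem ev_swap (v : Fin 2 → D4) (t : DMTerm (Fin 2)) :
    ev (fun i => swap (v i)) t = swap (ev v t) := by
  induction t with
  | var i => rfl
  | meet t s iht ihs =>
    rw [ev_meet, ev_meet, iht, ihs]
    cases ev v t <;> cases ev v s <;> rfl
  | join t s iht ihs =>
    rw [ev_join, ev_join, iht, ihs]
    cases ev v t <;> cases ev v s <;> rfl
  | neg t iht =>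
    rw [ev_neg, ev_neg, iht]
    cases ev v t <;> rfl
  | zero => rfl
  | one => rfl

/-- The first coordinate of a term function determines the second one. -/
theorem snd_eval (v : Fin 2 → D4) (t : DMTerm (Fin 2)) :
    snd (ev v t) = fst (ev (fun i => swap (v i)) t) := by
  rw [ev_swap, swap, fst_mk]

/-- The order `b ⊑ 0, 1 ⊑ a` on `D₄`: increasing in the first coordinate and decreasing in the
second one. -/
def KLe (x y : D4) : Prop := fst x ≤ fst y ∧ snd y ≤ snd x

theorem ev_mono {v w : Fin 2 → D4} (h : ∀ i, KLe (v i) (w i)) (t : DMTerm (Fin 2)) :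
    KLe (ev v t) (ev w t) := by
  induction t with
  | var i => exact h i
  | meet t s iht ihs =>
    simp only [KLe, ev_meet, fst_meet, snd_meet] at *
    exact ⟨inf_le_inf iht.1 ihs.1, inf_le_inf iht.2 ihs.2⟩
  | join t s iht ihs =>
    simp only [KLe, ev_join, fst_join, snd_join] at *
    exact ⟨sup_le_sup iht.1 ihs.1, sup_le_sup iht.2 ihs.2⟩
  | neg t iht =>
    simp only [KLe, ev_neg, fst_neg, snd_neg] at *
    exact ⟨compl_le_compl iht.2, compl_le_compl iht.1⟩
  | zero => exact ⟨le_rfl, le_rfl⟩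
  | one => exact ⟨le_rfl, le_rfl⟩

/-- The assignment under which the literals `x, ¬x, y, ¬y` have the given first coordinates. -/
def assign (p : ((Bool × Bool) × Bool) × Bool) : Fin 2 → D4 :=
  ![mk p.1.1.1 (!p.1.1.2), mk p.1.2 (!p.2)]

theorem assign_surjective (v : Fin 2 → D4) : ∃ p, assign p = v := by
  refine ⟨(((fst (v 0), !snd (v 0)), fst (v 1)), !snd (v 1)), ?_⟩
  ext i
  fin_cases i <;> simp [assign]

theorem fst_eval_mono (t : DMTerm (Fin 2)) : Monotone fun p => fst (ev (assign p) t) := by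
  intro p q h
  refine (ev_mono (fun i => ?_) t).1
  obtain ⟨⟨⟨h₁, h₂⟩, h₃⟩, h₄⟩ := h
  fin_cases i
  · simp only [KLe, assign, Fin.zero_eta, Matrix.cons_val_zero, fst_mk, snd_mk]
    exact ⟨h₁, compl_le_compl h₂⟩
  · simp only [KLe, assign, Fin.mk_one, Matrix.cons_val_one, Matrix.cons_val_zero, fst_mk, snd_mk]
    exact ⟨h₃, compl_le_compl h₄⟩

/-- The monotone Boolean function of the four literals given by a term. -/
def toMono (t : DMTerm (Fin 2)) : MonoFun := ⟨fun p => fst (ev (assign p) t), fst_eval_mono t⟩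

theorem toMono_eq_iff (t s : DMTerm (Fin 2)) :
    toMono t = toMono s ↔ ∀ v, ev v t = ev v s := by
  constructor
  · intro h
    have key : ∀ v, fst (ev v t) = fst (ev v s) := by
      intro v
      obtain ⟨p, rfl⟩ := assign_surjective v
      exact DFunLike.congr_fun h p
    intro v
    exact ext_coord (key v) (by rw [snd_eval, snd_eval, key])
  · intro h
    ext p
    exact congrArg fst (h _)

/-! ### Every monotone function comes from a term -/

/-- The expansion `f 0 ∨ (ℓ ∧ f 1)` of a monotone map `f`, along a term `ℓ`, where `τ` assigns
terms to the values of `f`. -/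
def expand {M : Type} [Preorder M] (l : DMTerm (Fin 2)) (τ : M → DMTerm (Fin 2))
    (f : Bool →o M) : DMTerm (Fin 2) :=
  .join (τ (f false)) (.meet l (τ (f true)))

theorem expand_spec {M : Type} [Preorder M] (l : DMTerm (Fin 2)) (τ : M → DMTerm (Fin 2))
    (v : Fin 2 → D4) (g : M →o Bool) (hτ : ∀ m, fst (ev v (τ m)) = g m) (f : Bool →o M) :
    fst (ev v (expand l τ f)) = g (f (fst (ev v l))) := by
  rw [expand, ev_join, fst_join, ev_meet, fst_meet, hτ, hτ]
  cases fst (ev v l)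
  · simp
  · have h : g (f false) ≤ g (f true) := g.monotone (f.monotone (Bool.false_le true))
    rw [Bool.true_and]
    exact sup_eq_right.2 h

/-- The constant term with a given Boolean value. -/
def const (x : Bool) : DMTerm (Fin 2) := bif x then .one else .zero

theorem fst_const (v : Fin 2 → D4) (x : Bool) : fst (ev v (const x)) = x := by
  cases x <;> rfl

theorem toMono_surjective : Function.Surjective toMono := by
  intro F
  let f : Bool →o Bool →o Bool →o Bool →o Bool :=
    OrderHom.curry (OrderHom.curry (OrderHom.curry F))
  refine ⟨expand (.var 0) (expand (.neg (.var 0)) (expand (.var 1)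
    (expand (.neg (.var 1)) const))) f, ?_⟩
  ext p
  have e₀ : fst (ev (assign p) (.var 0)) = p.1.1.1 := by simp [ev_var, assign]
  have e₁ : fst (ev (assign p) (.neg (.var 0))) = p.1.1.2 := by
    simp [ev_neg, fst_neg, ev_var, assign]
  have e₂ : fst (ev (assign p) (.var 1)) = p.1.2 := by simp [ev_var, assign]
  have e₃ : fst (ev (assign p) (.neg (.var 1))) = p.2 := by
    simp [ev_neg, fst_neg, ev_var, assign]
  -- Evaluating at the values of the remaining literals is monotone in the function.
  let g₁ : (Bool →o Bool) →o Bool := ⟨fun k => k p.2, fun _ _ h => h p.2⟩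
  let g₂ : (Bool →o Bool →o Bool) →o Bool := ⟨fun k => k p.1.2 p.2, fun _ _ h => h p.1.2 p.2⟩
  let g₃ : (Bool →o Bool →o Bool →o Bool) →o Bool :=
    ⟨fun k => k p.1.1.2 p.1.2 p.2, fun _ _ h => h p.1.1.2 p.1.2 p.2⟩
  have h₁ : ∀ k, fst (ev (assign p) (expand (.neg (.var 1)) const k)) = g₁ k := fun k => by
    rw [expand_spec _ _ _ OrderHom.id (fst_const _), e₃]; rfl
  have h₂ : ∀ k, fst (ev (assign p) (expand (.var 1) (expand (.neg (.var 1)) const) k)) = g₂ k :=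
    fun k => by rw [expand_spec _ _ _ g₁ h₁, e₂]; rfl
  have h₃ : ∀ k, fst (ev (assign p) (expand (.neg (.var 0)) (expand (.var 1)
      (expand (.neg (.var 1)) const)) k)) = g₃ k :=
    fun k => by rw [expand_spec _ _ _ g₂ h₂, e₁]; rfl
  change fst (ev (assign p) (expand _ _ f)) = F p
  rw [expand_spec _ _ _ g₃ h₃, e₀]
  rfl

end FreeDM2

/-- The free De Morgan algebra on two generators has exactly 168 elements. -/
theorem statement6 : Nat.card (Quotient freeDM2Setoid) = 168 := by
  rw [← FreeDM2.card_monoFun]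
  refine Nat.card_eq_of_bijective
    (Quotient.lift FreeDM2.toMono fun t s h => (FreeDM2.toMono_eq_iff t s).2 h) ⟨?_, ?_⟩
  · intro x y
    induction x using Quotient.inductionOn
    induction y using Quotient.inductionOn
    intro h
    exact Quotient.sound ((FreeDM2.toMono_eq_iff _ _).1 h)
  · intro F
    obtain ⟨t, rfl⟩ := FreeDM2.toMono_surjective F
    exact ⟨Quotient.mk _ t, rfl⟩
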